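/- arXiv:1812.10248 — 3 statements merged into one kernel-verified Lean document; each statement's English description precedes it below -/
import Mathlib

section
/- Let φ = (φ_1,…,φ_N): B_N → B_N be holomorphic. Then the identity 1 − log(1 − Σ_j φ_j(z)·w_j) = 1 − log(1 − Σ_j z_j·φ_j(w)) holds for all z,w ∈ B_N if and only if there exists a symmetric N×N complex matrix M (Mᵀ = M) such that φ(z) = Mz for all z ∈ B_N; in that case M = φ'(0) and the operator norm of M is at most 1. -/
open ComplexConjugate

/-- The open unit ball of `ℂ^N` (Euclidean norm). -/
def unitBall (N : ℕ) : Set (Fin N → ℂ) := {z | ∑ j, ‖z j‖ ^ 2 < 1}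

/-- The Jacobian matrix `φ'(0)`, with `(i, j)` entry `(∂φ_i/∂z_j)(0)`. -/
noncomputable def jac0 (N : ℕ) (φ : (Fin N → ℂ) → Fin N → ℂ) :
    Matrix (Fin N) (Fin N) ℂ :=
  Matrix.of fun i j => fderiv ℂ φ 0 (Pi.single j 1) i

/-!
On the unit ball every `1 - ∑ j, φ z j * w j` is nonzero, so exponentiating the kernel identity
turns it into `φ z ⬝ᵥ w = z ⬝ᵥ φ w`: the map `φ` is its own adjoint for a nondegenerate bilinear
form. An adjoint is automatically linear, even when the relation is only known on a spanning set.
Holomorphy of `φ` is thus a consequence of the identity, and `φ` is the restriction of a symmetric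
matrix, which is then its derivative at `0` and contracts the Euclidean norm.
-/

open Matrix Metric Set Submodule Topology

/- The vector `L x` is pinned down by `B (L x) w = B x (φ w)` for `w ∈ s`. The right-hand side is
linear in `x`, and it is of the required form for `x ∈ s`, hence for all `x`. -/
theorem exists_linearMap_eqOn_isSelfAdjoint {R V M : Type*} [CommRing R] [AddCommGroup V]
    [Module R V] [AddCommGroup M] [Module R M] {B : V →ₗ[R] V →ₗ[R] M} (hB : B.SeparatingLeft)
    {s : Set V} (hs : span R s = ⊤) {φ : V → V} (hφ : ∀ z ∈ s, ∀ w ∈ s, B (φ z) w = B z (φ w)) :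
    ∃ L : V →ₗ[R] V, EqOn φ L s ∧ B.IsSelfAdjoint L := by
  let pairing : V →ₗ[R] s → M := LinearMap.pi fun w => B.flip w
  let pairingImage : V →ₗ[R] s → M := LinearMap.pi fun w => B.flip (φ w)
  have pairing_injective : Function.Injective pairing := by
    refine (injective_iff_map_eq_zero pairing).mpr fun x hx => hB x ?_
    exact LinearMap.congr_fun (LinearMap.ext_on hs fun w hw => congrFun hx ⟨w, hw⟩ : B x = 0)
  have pairing_apply_of_mem : ∀ z ∈ s, pairing (φ z) = pairingImage z :=
    fun z hz => funext fun w => hφ z hz w w.2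
  have span_le_comap : span R s ≤ (LinearMap.range pairing).comap pairingImage :=
    span_le.mpr fun z hz => ⟨φ z, pairing_apply_of_mem z hz⟩
  have mem_range (x : V) : pairingImage x ∈ LinearMap.range pairing :=
    span_le_comap (hs ▸ mem_top)
  let L : V →ₗ[R] V := (LinearEquiv.ofInjective pairing pairing_injective).symm ∘ₗ
    pairingImage.codRestrict _ mem_range
  have pairing_L (x : V) : pairing (L x) = pairingImage x :=
    congrArg Subtype.val ((LinearEquiv.ofInjective pairing pairing_injective).apply_symm_apply _)
  have eqOn_L : EqOn φ L s := fun z hz =>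
    pairing_injective ((pairing_apply_of_mem z hz).trans (pairing_L z).symm)
  refine ⟨L, eqOn_L, fun x => LinearMap.congr_fun (g := B x ∘ₗ L) (LinearMap.ext_on hs ?_)⟩
  intro w hw
  calc B (L x) w = B x (φ w) := congrFun (pairing_L x) ⟨w, hw⟩
    _ = B x (L w) := by rw [eqOn_L hw]

theorem isSymm_iff_forall_mulVec_dotProduct {R n : Type*} [CommSemiring R] [Fintype n]
    {M : Matrix n n R} : M.IsSymm ↔ ∀ z w, M *ᵥ z ⬝ᵥ w = z ⬝ᵥ M *ᵥ w := by
  have transpose_adjoint (z w : n → R) : M *ᵥ z ⬝ᵥ w = z ⬝ᵥ Mᵀ *ᵥ w := by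
    rw [dotProduct_mulVec, vecMul_transpose]
  simp only [transpose_adjoint]
  refine ⟨fun hM z w => by rw [hM.eq], fun h => ext_iff_mulVec.mpr fun w => ?_⟩
  exact dotProduct_eq _ _ fun z => by simpa only [dotProduct_comm z] using h z w

theorem exists_isSymm_eqOn_mulVec_iff {R n : Type*} [CommRing R] [Fintype n] {s : Set (n → R)}
    (hs : span R s = ⊤) {φ : (n → R) → n → R} :
    (∃ M : Matrix n n R, M.IsSymm ∧ EqOn φ M.mulVec s) ↔
      ∀ z ∈ s, ∀ w ∈ s, φ z ⬝ᵥ w = z ⬝ᵥ φ w := by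
  classical
  constructor
  · rintro ⟨M, hM, hφ⟩ z hz w hw
    rw [hφ hz, hφ hw, isSymm_iff_forall_mulVec_dotProduct.mp hM]
  · intro h
    have separating : (dotProductBilin R R (m := n) (A := R)).SeparatingLeft := dotProduct_eq_zero
    obtain ⟨L, hφL, hL⟩ := exists_linearMap_eqOn_isSelfAdjoint separating hs h
    refine ⟨L.toMatrix', isSymm_iff_forall_mulVec_dotProduct.mpr fun z w => ?_, fun z hz => ?_⟩
    · simpa only [LinearMap.toMatrix'_mulVec, dotProductBilin_apply_apply] using hL z w
    · rw [LinearMap.toMatrix'_mulVec, hφL hz]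

theorem span_eq_top_of_mem_nhds {R E : Type*} [Ring R] [TopologicalSpace R] [TopologicalSpace E]
    [AddCommGroup E] [ContinuousAdd E] [Module R E] [ContinuousSMul R E]
    [(𝓝[{c : R | IsUnit c}] 0).NeBot] {s : Set E} {x : E} (hs : s ∈ 𝓝 x) : span R s = ⊤ :=
  eq_top_of_nonempty_interior' _
    ⟨x, mem_interior_iff_mem_nhds.mpr (Filter.mem_of_superset hs subset_span)⟩

theorem opNorm_le_one_of_mapsTo_ball {𝕜 E F : Type*} [DenselyNormedField 𝕜]
    [NormedAddCommGroup E] [NormedSpace 𝕜 E] [SeminormedAddCommGroup F] [NormedSpace 𝕜 F]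
    {f : E →L[𝕜] F} (hf : MapsTo f (ball 0 1) (closedBall 0 1)) : ‖f‖ ≤ 1 := by
  rw [← f.sSup_unit_ball_eq_norm]
  refine Real.sSup_le (forall_mem_image.mpr fun x hx => ?_) zero_le_one
  exact mem_closedBall_zero_iff.mp (hf hx)

theorem norm_dotProduct_le {𝕜 n : Type*} [RCLike 𝕜] [Fintype n] (z w : n → 𝕜) :
    ‖z ⬝ᵥ w‖ ≤ ‖WithLp.toLp 2 z‖ * ‖WithLp.toLp 2 w‖ := by
  have norm_star_w : ‖WithLp.toLp 2 (star w)‖ = ‖WithLp.toLp 2 w‖ := by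
    simp [EuclideanSpace.norm_eq]
  simpa [EuclideanSpace.inner_toLp_toLp, norm_star_w, mul_comm] using
    norm_inner_le_norm (𝕜 := 𝕜) (WithLp.toLp 2 (star w)) (WithLp.toLp 2 z)

theorem one_sub_log_one_sub_inj {a b : ℂ} (ha : a ≠ 1) (hb : b ≠ 1) :
    1 - Complex.log (1 - a) = 1 - Complex.log (1 - b) ↔ a = b := by
  refine ⟨fun h => ?_, fun h => by rw [h]⟩
  have hexp := congrArg Complex.exp (sub_right_injective h)
  rw [Complex.exp_log (sub_ne_zero.mpr ha.symm), Complex.exp_log (sub_ne_zero.mpr hb.symm)] at hexp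
  exact sub_right_injective hexp

section UnitBall

variable {N : ℕ} {φ : (Fin N → ℂ) → Fin N → ℂ} {M : Matrix (Fin N) (Fin N) ℂ}

theorem mem_unitBall_iff_norm_lt_one {z : Fin N → ℂ} : z ∈ unitBall N ↔ ‖WithLp.toLp 2 z‖ < 1 := by
  rw [← sq_lt_one_iff₀ (norm_nonneg _), EuclideanSpace.norm_sq_eq]
  rfl

theorem unitBall_mem_nhds_zero (N : ℕ) : unitBall N ∈ 𝓝 0 :=
  (isOpen_lt (by fun_prop) continuous_const).mem_nhds (by simp)

theorem dotProduct_ne_one_of_mem_unitBall {z w : Fin N → ℂ} (hz : z ∈ unitBall N)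
    (hw : w ∈ unitBall N) : z ⬝ᵥ w ≠ 1 := by
  suffices ‖z ⬝ᵥ w‖ < 1 from fun h => this.ne (by rw [h, norm_one])
  exact (norm_dotProduct_le z w).trans_lt <| mul_lt_one_of_nonneg_of_lt_one_left (norm_nonneg _)
    (mem_unitBall_iff_norm_lt_one.mp hz) (mem_unitBall_iff_norm_lt_one.mp hw).le

theorem norm_toEuclideanLin_le_one_of_mapsTo_unitBall
    (hM : MapsTo M.mulVec (unitBall N) (unitBall N)) :
    ‖LinearMap.toContinuousLinearMap (Matrix.toEuclideanLin M)‖ ≤ 1 := by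
  refine opNorm_le_one_of_mapsTo_ball fun x hx => mem_closedBall_zero_iff.mpr ?_
  have hxball : x.ofLp ∈ unitBall N := mem_unitBall_iff_norm_lt_one.mpr (mem_ball_zero_iff.mp hx)
  exact (mem_unitBall_iff_norm_lt_one.mp (hM hxball)).le

theorem jac0_eq_of_eventuallyEq_mulVec (h : φ =ᶠ[𝓝 0] M.mulVec) : jac0 N φ = M := by
  have hderiv : fderiv ℂ φ 0 = LinearMap.toContinuousLinearMap M.mulVecLin :=
    h.fderiv_eq.trans (LinearMap.toContinuousLinearMap M.mulVecLin).fderiv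
  ext i j
  simp [jac0, hderiv]

theorem kernel_identity_iff_exists_isSymm (hmap : MapsTo φ (unitBall N) (unitBall N)) :
    (∀ z ∈ unitBall N, ∀ w ∈ unitBall N,
        1 - Complex.log (1 - φ z ⬝ᵥ w) = 1 - Complex.log (1 - z ⬝ᵥ φ w)) ↔
      ∃ M : Matrix (Fin N) (Fin N) ℂ, M.IsSymm ∧ EqOn φ M.mulVec (unitBall N) := by
  rw [exists_isSymm_eqOn_mulVec_iff (span_eq_top_of_mem_nhds (unitBall_mem_nhds_zero N))]
  refine forall₄_congr fun z hz w hw => one_sub_log_one_sub_inj ?_ ?_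
  · exact dotProduct_ne_one_of_mem_unitBall (hmap hz) hw
  · exact dotProduct_ne_one_of_mem_unitBall hz (hmap hw)

end UnitBall

theorem stmt_3_general (N : ℕ) (φ : (Fin N → ℂ) → Fin N → ℂ)
    (hmap : ∀ z ∈ unitBall N, φ z ∈ unitBall N) :
    ((∀ z ∈ unitBall N, ∀ w ∈ unitBall N,
        1 - Complex.log (1 - ∑ j, φ z j * w j) =
          1 - Complex.log (1 - ∑ j, z j * φ w j)) ↔
      ∃ M : Matrix (Fin N) (Fin N) ℂ, M.transpose = M ∧
        ∀ z ∈ unitBall N, φ z = M.mulVec z) ∧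
    ∀ M : Matrix (Fin N) (Fin N) ℂ, (∀ z ∈ unitBall N, φ z = M.mulVec z) →
      M = jac0 N φ ∧
        ‖LinearMap.toContinuousLinearMap (Matrix.toEuclideanLin M)‖ ≤ 1 := by
  refine ⟨kernel_identity_iff_exists_isSymm hmap, fun M hM => ⟨?_, ?_⟩⟩
  · have hnear : φ =ᶠ[𝓝 0] M.mulVec := Filter.eventuallyEq_of_mem (unitBall_mem_nhds_zero N) hM
    exact (jac0_eq_of_eventuallyEq_mulVec hnear).symm
  · exact norm_toEuclideanLin_le_one_of_mapsTo_unitBall (MapsTo.congr hmap hM)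

theorem stmt_3 (N : ℕ) (hN : 1 ≤ N)
    (φ : (Fin N → ℂ) → Fin N → ℂ)
    (hφ : DifferentiableOn ℂ φ (unitBall N))
    (hmap : ∀ z ∈ unitBall N, φ z ∈ unitBall N) :
    ((∀ z ∈ unitBall N, ∀ w ∈ unitBall N,
        1 - Complex.log (1 - ∑ j, φ z j * w j) =
          1 - Complex.log (1 - ∑ j, z j * φ w j)) ↔
      ∃ M : Matrix (Fin N) (Fin N) ℂ, M.transpose = M ∧
        ∀ z ∈ unitBall N, φ z = M.mulVec z) ∧
    ((∀ z ∈ unitBall N, ∀ w ∈ unitBall N,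
        1 - Complex.log (1 - ∑ j, φ z j * w j) =
          1 - Complex.log (1 - ∑ j, z j * φ w j)) →
      ∀ M : Matrix (Fin N) (Fin N) ℂ, M.transpose = M →
        (∀ z ∈ unitBall N, φ z = M.mulVec z) →
        M = jac0 N φ ∧
          ‖LinearMap.toContinuousLinearMap (Matrix.toEuclideanLin M)‖ ≤ 1) := by
  have h := stmt_3_general N φ hmap
  exact ⟨h.1, fun _ M _ hM => h.2 M hM⟩
end

section
/- Let ψ: B_N → ℂ and φ = (φ_1,…,φ_N): B_N → B_N be holomorphic and suppose the identity (†) holds: ψ(z)·(1 − log(1 − ⟨φ(z),w⟩)) = conj(ψ(w))·(1 − log(1 − ⟨z,φ(w)⟩)) for all z,w ∈ B_N. Then ψ(0) is a real number and ψ(z) = ψ(0)·(1 − log(1 − ⟨z,φ(0)⟩)) for all z ∈ B_N. If moreover ψ(0) ≠ 0, then for every k = 1,…,N and z ∈ B_N, φ_k(z) = φ_k(0) + (Σ_j conj((∂φ_j/∂z_k)(0))·z_j) / ((1 − ⟨z,φ(0)⟩)·(1 − log(1 − ⟨z,φ(0)⟩))), and the Jacobian matrix φ'(0) is Hermitian (φ'(0)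 equals its conjugate transpose). -/
open ComplexConjugate

/-!
Putting `w = 0` and `z = 0` in (†) shows that `ψ 0` is real and `ψ z = ψ 0 * K (φ 0) z`, where
`K w z = 1 - log (1 - ⟪w, z⟫)`. If `ψ 0 ≠ 0`, cancelling it leaves
`K (φ 0) z * K w (φ z) = K w (φ 0) * K (φ w) z`. Solving this for `⟪w, φ z⟫` with the exponential
shows that every component of `φ` is differentiable at `0`, without any regularity assumed, and
differentiating in `z` at `0` gives `φ w = φ 0 + (D w)⁻¹ • A w`, where
`D w = (1 - ⟪φ 0, w⟫) * K (φ 0) w` and the linear map `A` is the adjoint of the weak derivative of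
`φ` at `0`. As `D 0 = 1`, differentiating this formula at `0` shows that the weak derivative is
also `A` itself. Thus `A` is symmetric, hence bounded, and it is the derivative of `φ` at `0`.
-/

open Metric Set
open scoped InnerProductSpace

/-- The function `s ↦ 1 + log (1 / (1 - s))` of the unit disc, written `1 - log (1 - s)`. With
Mathlib's inner product, conjugate-linear in the first variable, `logKernel ⟪w, z⟫` is the value
at `z` of the reproducing kernel `K_w` of the Dirichlet space. -/
noncomputable def logKernel (s : ℂ) : ℂ := 1 - Complex.log (1 - s)

theorem one_sub_mem_slitPlane_of_norm_lt_one {s : ℂ} (hs : ‖s‖ < 1) :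
    1 - s ∈ Complex.slitPlane := by
  simpa [sub_eq_add_neg] using Complex.mem_slitPlane_of_norm_lt_one (z := -s) (by simpa using hs)

theorem one_sub_ne_zero_of_norm_lt_one {s : ℂ} (hs : ‖s‖ < 1) : 1 - s ≠ 0 :=
  Complex.slitPlane_ne_zero (one_sub_mem_slitPlane_of_norm_lt_one hs)

@[simp]
theorem logKernel_zero : logKernel 0 = 1 := by
  simp [logKernel]

theorem logKernel_conj {s : ℂ} (hs : ‖s‖ < 1) : logKernel (conj s) = conj (logKernel s) := by
  have harg := Complex.slitPlane_arg_ne_pi (one_sub_mem_slitPlane_of_norm_lt_one hs)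
  simp [logKernel, ← Complex.log_conj _ harg]

theorem logKernel_ne_zero {s : ℂ} (hs : ‖s‖ < 1) : logKernel s ≠ 0 := by
  intro h
  have hexp : 1 - s = Complex.exp 1 :=
    (Complex.exp_log (one_sub_ne_zero_of_norm_lt_one hs)).symm.trans
      (congrArg Complex.exp (sub_eq_zero.1 h).symm)
  have hnorm : ‖1 - s‖ < 2 := by
    linarith [norm_sub_le 1 s, norm_one (α := ℂ)]
  rw [hexp, Complex.norm_exp, Complex.one_re] at hnorm
  linarith [Real.exp_one_gt_d9]

theorem one_sub_exp_one_sub_logKernel {s : ℂ} (hs : ‖s‖ < 1) :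
    1 - Complex.exp (1 - logKernel s) = s := by
  simp [logKernel, Complex.exp_log (one_sub_ne_zero_of_norm_lt_one hs)]

theorem hasDerivAt_logKernel {s : ℂ} (hs : ‖s‖ < 1) :
    HasDerivAt logKernel (1 - s)⁻¹ s := by
  refine ((((hasDerivAt_id s).const_sub 1).clog
    (one_sub_mem_slitPlane_of_norm_lt_one hs)).const_sub 1).congr_deriv ?_
  simp [neg_div]

section InnerProduct

variable {E : Type*} [NormedAddCommGroup E] [InnerProductSpace ℂ E]

theorem norm_inner_lt_one {w z : E} (hw : w ∈ ball (0 : E) 1) (hz : z ∈ ball (0 : E) 1) :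
    ‖⟪w, z⟫_ℂ‖ < 1 := by
  rw [mem_ball_zero_iff] at hw hz
  exact (norm_inner_le_norm w z).trans_lt
    (mul_lt_one_of_nonneg_of_lt_one_left (norm_nonneg w) hw hz.le)

theorem differentiableAt_logKernel_inner {u z : E} (h : ‖⟪u, z⟫_ℂ‖ < 1) :
    DifferentiableAt ℂ (fun x => logKernel ⟪u, x⟫_ℂ) z :=
  (hasDerivAt_logKernel h).differentiableAt.comp z (innerSL ℂ u).differentiableAt

theorem hasFDerivAt_logKernel_inner_zero (u : E) :
    HasFDerivAt (fun x => logKernel ⟪u, x⟫_ℂ) (innerSL ℂ u) 0 := by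
  have hk : HasDerivAt logKernel (1 - ⟪u, (0 : E)⟫_ℂ)⁻¹ ⟪u, (0 : E)⟫_ℂ :=
    hasDerivAt_logKernel (by simp)
  refine (hk.comp_hasFDerivAt (0 : E) (innerSL ℂ u).hasFDerivAt).congr_fderiv ?_
  simp

theorem differentiableAt_inv_one_sub_mul_logKernel {u z : E} (h : ‖⟪u, z⟫_ℂ‖ < 1) :
    DifferentiableAt ℂ (fun x => ((1 - ⟪u, x⟫_ℂ) * logKernel ⟪u, x⟫_ℂ)⁻¹) z :=
  (((innerSL ℂ u).differentiableAt.const_sub 1).mul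
    (differentiableAt_logKernel_inner h)).fun_inv
      (mul_ne_zero (one_sub_ne_zero_of_norm_lt_one h) (logKernel_ne_zero h))

end InnerProduct

section WeakDerivative

variable {𝕜 E F : Type*} [RCLike 𝕜] [NormedAddCommGroup E] [InnerProductSpace 𝕜 E]
  [CompleteSpace E] [NormedAddCommGroup F] [InnerProductSpace 𝕜 F]

/-- The adjoint of the weak derivative at `x` of a map `f` all of whose components `⟪w, f ·⟫` are
differentiable at `x`: it sends `w` to the Riesz representative of the derivative of the
`w`-component. Only its linearity is recorded, not its boundedness. -/
noncomputable def weakFDerivAdjoint (f : E → F) (x : E)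
    (hf : ∀ w, DifferentiableAt 𝕜 (fun z => ⟪w, f z⟫_𝕜) x) : F →ₗ[𝕜] E where
  toFun w := (InnerProductSpace.toDual 𝕜 E).symm (fderiv 𝕜 (fun z => ⟪w, f z⟫_𝕜) x)
  map_add' v w := by
    simp only [inner_add_left, fderiv_fun_add (hf v) (hf w), map_add]
  map_smul' c w := by
    simp only [inner_smul_left, fderiv_const_mul (hf w), LinearIsometryEquiv.map_smulₛₗ,
      RingHom.id_apply, starRingEnd_self_apply]

theorem inner_weakFDerivAdjoint {f : E → F} {x : E}
    (hf : ∀ w, DifferentiableAt 𝕜 (fun z => ⟪w, f z⟫_𝕜) x) (w : F) (z : E) :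
    ⟪weakFDerivAdjoint f x hf w, z⟫_𝕜 = fderiv 𝕜 (fun z => ⟪w, f z⟫_𝕜) x z :=
  InnerProductSpace.toDual_symm_apply

end WeakDerivative

/-- The identity (†) for a self-map `φ` of the unit ball: the weighted composition operator
`f ↦ ψ · (f ∘ φ)` agrees with its adjoint on all reproducing kernels of the Dirichlet space. -/
structure IsHermitianOnKernels {E : Type*} [NormedAddCommGroup E] [InnerProductSpace ℂ E]
    (ψ : E → ℂ) (φ : E → E) : Prop where
  mapsTo : MapsTo φ (ball 0 1) (ball 0 1)
  mul_logKernel : ∀ z ∈ ball (0 : E) 1, ∀ w ∈ ball (0 : E) 1,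
    ψ z * logKernel ⟪w, φ z⟫_ℂ = conj (ψ w) * logKernel ⟪φ w, z⟫_ℂ

namespace IsHermitianOnKernels

variable {E : Type*} [NormedAddCommGroup E] [InnerProductSpace ℂ E] {ψ : E → ℂ} {φ : E → E}

theorem map_zero_mem_ball (h : IsHermitianOnKernels ψ φ) : φ 0 ∈ ball (0 : E) 1 :=
  h.mapsTo (mem_ball_self one_pos)

theorem conj_apply (h : IsHermitianOnKernels ψ φ) {w : E} (hw : w ∈ ball (0 : E) 1) :
    conj (ψ w) = ψ 0 * logKernel ⟪w, φ 0⟫_ℂ := by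
  simpa using (h.mul_logKernel 0 (mem_ball_self one_pos) w hw).symm

theorem conj_apply_zero (h : IsHermitianOnKernels ψ φ) : conj (ψ 0) = ψ 0 := by
  simpa using h.conj_apply (mem_ball_self one_pos)

theorem apply_eq_mul_logKernel (h : IsHermitianOnKernels ψ φ) {z : E} (hz : z ∈ ball (0 : E) 1) :
    ψ z = ψ 0 * logKernel ⟪φ 0, z⟫_ℂ := by
  simpa [h.conj_apply_zero] using h.mul_logKernel z hz 0 (mem_ball_self one_pos)

theorem logKernel_mul_logKernel (h : IsHermitianOnKernels ψ φ) (h0 : ψ 0 ≠ 0) {z w : E}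
    (hz : z ∈ ball (0 : E) 1) (hw : w ∈ ball (0 : E) 1) :
    logKernel ⟪φ 0, z⟫_ℂ * logKernel ⟪w, φ z⟫_ℂ =
      logKernel ⟪w, φ 0⟫_ℂ * logKernel ⟪φ w, z⟫_ℂ := by
  have key := h.mul_logKernel z hz w hw
  rw [h.apply_eq_mul_logKernel hz, h.conj_apply hw, mul_assoc, mul_assoc] at key
  exact mul_left_cancel₀ h0 key

theorem differentiableAt_inner_of_mem_ball (h : IsHermitianOnKernels ψ φ) (h0 : ψ 0 ≠ 0) {w : E}
    (hw : w ∈ ball (0 : E) 1) : DifferentiableAt ℂ (fun z => ⟪w, φ z⟫_ℂ) 0 := by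
  have hnum : DifferentiableAt ℂ (fun z => logKernel ⟪φ w, z⟫_ℂ) 0 :=
    (hasFDerivAt_logKernel_inner_zero (φ w)).differentiableAt
  have hden : DifferentiableAt ℂ (fun z => (logKernel ⟪φ 0, z⟫_ℂ)⁻¹) 0 :=
    (hasFDerivAt_logKernel_inner_zero (φ 0)).differentiableAt.fun_inv
      (logKernel_ne_zero (by simp))
  have hquot := (hnum.const_mul (logKernel ⟪w, φ 0⟫_ℂ)).mul hden
  refine ((hquot.const_sub 1).cexp.const_sub 1).congr_of_eventuallyEq ?_
  filter_upwards [ball_mem_nhds (0 : E) one_pos] with z hz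
  rw [Pi.mul_apply, ← h.logKernel_mul_logKernel h0 hz hw, ← div_eq_mul_inv,
    mul_div_cancel_left₀ _ (logKernel_ne_zero (norm_inner_lt_one h.map_zero_mem_ball hz)),
    one_sub_exp_one_sub_logKernel (norm_inner_lt_one hw (h.mapsTo hz))]

theorem differentiableAt_inner (h : IsHermitianOnKernels ψ φ) (h0 : ψ 0 ≠ 0) (w : E) :
    DifferentiableAt ℂ (fun z => ⟪w, φ z⟫_ℂ) 0 := by
  obtain ⟨c, hc, hcw⟩ : ∃ c : ℂ, c ≠ 0 ∧ c • w ∈ ball (0 : E) 1 := by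
    have hpos : (0 : ℝ) < ‖w‖ + 1 := by positivity
    refine ⟨((‖w‖ + 1 : ℝ) : ℂ)⁻¹, inv_ne_zero (Complex.ofReal_ne_zero.2 hpos.ne'), ?_⟩
    rw [mem_ball_zero_iff, norm_smul, norm_inv, Complex.norm_of_nonneg hpos.le,
      inv_mul_lt_one₀ hpos]
    exact lt_add_one _
  have hd := (h.differentiableAt_inner_of_mem_ball h0 hcw).const_mul (conj c)⁻¹
  simpa only [inner_smul_left, inv_mul_cancel_left₀ ((map_ne_zero _).2 hc)] using hd

theorem fderiv_inner_apply (h : IsHermitianOnKernels ψ φ) (h0 : ψ 0 ≠ 0) {w : E}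
    (hw : w ∈ ball (0 : E) 1) (z : E) :
    fderiv ℂ (fun z => ⟪w, φ z⟫_ℂ) 0 z =
      (1 - ⟪w, φ 0⟫_ℂ) * logKernel ⟪w, φ 0⟫_ℂ * ⟪φ w - φ 0, z⟫_ℂ := by
  have hlt := norm_inner_lt_one hw h.map_zero_mem_ball
  have hleft := (hasFDerivAt_logKernel_inner_zero (φ 0)).mul
    ((hasDerivAt_logKernel hlt).comp_hasFDerivAt (0 : E)
      (h.differentiableAt_inner h0 w).hasFDerivAt)
  have hright := (hasFDerivAt_logKernel_inner_zero (φ w)).const_mul (logKernel ⟪w, φ 0⟫_ℂ)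
  have heq := hleft.unique (hright.congr_of_eventuallyEq (by
    filter_upwards [ball_mem_nhds (0 : E) one_pos] with x hx using
      h.logKernel_mul_logKernel h0 hx hw))
  have happly : (1 - ⟪w, φ 0⟫_ℂ)⁻¹ * fderiv ℂ (fun z => ⟪w, φ z⟫_ℂ) 0 z +
      logKernel ⟪w, φ 0⟫_ℂ * ⟪φ 0, z⟫_ℂ = logKernel ⟪w, φ 0⟫_ℂ * ⟪φ w, z⟫_ℂ := by
    simpa using congr($heq z)
  have hne := one_sub_ne_zero_of_norm_lt_one hlt
  rw [inner_sub_left]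
  field_simp at happly
  linear_combination happly

section Hilbert

variable [CompleteSpace E]

theorem weakFDerivAdjoint_apply (h : IsHermitianOnKernels ψ φ) (h0 : ψ 0 ≠ 0) {w : E}
    (hw : w ∈ ball (0 : E) 1) :
    weakFDerivAdjoint φ 0 (h.differentiableAt_inner h0) w =
      ((1 - ⟪φ 0, w⟫_ℂ) * logKernel ⟪φ 0, w⟫_ℂ) • (φ w - φ 0) := by
  refine ext_inner_right ℂ fun z => ?_
  have hconj : conj (logKernel ⟪φ 0, w⟫_ℂ) = logKernel ⟪w, φ 0⟫_ℂ := by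
    rw [← logKernel_conj (norm_inner_lt_one h.map_zero_mem_ball hw), inner_conj_symm]
  rw [inner_weakFDerivAdjoint, h.fderiv_inner_apply h0 hw, inner_smul_left, map_mul, hconj,
    map_sub, map_one, inner_conj_symm]

theorem map_eq_add_weakFDerivAdjoint (h : IsHermitianOnKernels ψ φ) (h0 : ψ 0 ≠ 0) {z : E}
    (hz : z ∈ ball (0 : E) 1) :
    φ z = φ 0 + ((1 - ⟪φ 0, z⟫_ℂ) * logKernel ⟪φ 0, z⟫_ℂ)⁻¹ •
      weakFDerivAdjoint φ 0 (h.differentiableAt_inner h0) z := by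
  have hlt := norm_inner_lt_one h.map_zero_mem_ball hz
  rw [h.weakFDerivAdjoint_apply h0 hz, inv_smul_smul₀
    (mul_ne_zero (one_sub_ne_zero_of_norm_lt_one hlt) (logKernel_ne_zero hlt)), add_sub_cancel]

theorem isSymmetric_weakFDerivAdjoint (h : IsHermitianOnKernels ψ φ) (h0 : ψ 0 ≠ 0) :
    (weakFDerivAdjoint φ 0 (h.differentiableAt_inner h0)).IsSymmetric := by
  intro w z
  set A := weakFDerivAdjoint φ 0 (h.differentiableAt_inner h0) with hA
  have hline : HasLineDerivAt ℂ (fun x => ⟪w, φ x⟫_ℂ) ⟪A w, z⟫_ℂ 0 z := by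
    rw [inner_weakFDerivAdjoint]
    exact (h.differentiableAt_inner h0 w).hasFDerivAt.hasLineDerivAt z
  have hfactor : DifferentiableAt ℂ
      (fun t : ℂ => ((1 - ⟪φ 0, t • z⟫_ℂ) * logKernel ⟪φ 0, t • z⟫_ℂ)⁻¹) 0 :=
    (differentiableAt_inv_one_sub_mul_logKernel (by simp)).comp (0 : ℂ)
      (differentiableAt_id.smul_const z)
  have hformula : HasDerivAt (fun t : ℂ => ⟪w, φ 0⟫_ℂ +
      t * (((1 - ⟪φ 0, t • z⟫_ℂ) * logKernel ⟪φ 0, t • z⟫_ℂ)⁻¹ * ⟪w, A z⟫_ℂ)) ⟪w, A z⟫_ℂ 0 := by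
    simpa using ((hasDerivAt_id (0 : ℂ)).fun_mul
      (hfactor.mul_const ⟪w, A z⟫_ℂ).hasDerivAt).const_add ⟪w, φ 0⟫_ℂ
  have hball : ∀ᶠ t : ℂ in nhds 0, t • z ∈ ball (0 : E) 1 :=
    (continuous_id.smul continuous_const).continuousAt.eventually_mem
      (by simpa using ball_mem_nhds (0 : E) one_pos)
  refine hline.unique (hformula.congr_of_eventuallyEq ?_)
  filter_upwards [hball] with t ht
  simp only [zero_add, h.map_eq_add_weakFDerivAdjoint h0 ht, ← hA, map_smul, inner_add_right,
    inner_smul_right]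
  ring

-- By the Hellinger–Toeplitz theorem; this is what makes `φ` Fréchet differentiable.
theorem continuous_weakFDerivAdjoint (h : IsHermitianOnKernels ψ φ) (h0 : ψ 0 ≠ 0) :
    Continuous (weakFDerivAdjoint φ 0 (h.differentiableAt_inner h0)) :=
  (h.isSymmetric_weakFDerivAdjoint h0).continuous

theorem hasFDerivAt_zero (h : IsHermitianOnKernels ψ φ) (h0 : ψ 0 ≠ 0) :
    HasFDerivAt φ (⟨weakFDerivAdjoint φ 0 (h.differentiableAt_inner h0),
      h.continuous_weakFDerivAdjoint h0⟩ : E →L[ℂ] E) 0 := by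
  set A : E →L[ℂ] E := ⟨weakFDerivAdjoint φ 0 (h.differentiableAt_inner h0),
    h.continuous_weakFDerivAdjoint h0⟩
  have hfactor := (differentiableAt_inv_one_sub_mul_logKernel (u := φ 0) (z := 0)
    (by simp)).hasFDerivAt
  have hformula := ((hfactor.smul A.hasFDerivAt).const_add (φ 0)).congr_fderiv (g' := A) (by simp)
  refine hformula.congr_of_eventuallyEq ?_
  filter_upwards [ball_mem_nhds (0 : E) one_pos] with z hz using
    h.map_eq_add_weakFDerivAdjoint h0 hz

theorem isSelfAdjoint_fderiv (h : IsHermitianOnKernels ψ φ) (h0 : ψ 0 ≠ 0) :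
    IsSelfAdjoint (fderiv ℂ φ 0) := by
  rw [(h.hasFDerivAt_zero h0).fderiv, ContinuousLinearMap.isSelfAdjoint_iff_isSymmetric]
  exact h.isSymmetric_weakFDerivAdjoint h0

theorem map_eq_add_adjoint_fderiv (h : IsHermitianOnKernels ψ φ) (h0 : ψ 0 ≠ 0) {z : E}
    (hz : z ∈ ball (0 : E) 1) :
    φ z = φ 0 + ((1 - ⟪φ 0, z⟫_ℂ) * logKernel ⟪φ 0, z⟫_ℂ)⁻¹ •
      ContinuousLinearMap.adjoint (fderiv ℂ φ 0) z := by
  rw [(h.isSelfAdjoint_fderiv h0).adjoint_eq, (h.hasFDerivAt_zero h0).fderiv]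
  exact h.map_eq_add_weakFDerivAdjoint h0 hz

theorem differentiableOn (h : IsHermitianOnKernels ψ φ) (h0 : ψ 0 ≠ 0) :
    DifferentiableOn ℂ φ (ball 0 1) := by
  refine DifferentiableOn.congr (fun z hz => ?_) fun z hz => h.map_eq_add_adjoint_fderiv h0 hz
  have hfactor := differentiableAt_inv_one_sub_mul_logKernel
    (norm_inner_lt_one h.map_zero_mem_ball hz)
  exact ((hfactor.smul (ContinuousLinearMap.differentiableAt _)).const_add
    (φ 0)).differentiableWithinAt

end Hilbert

end IsHermitianOnKernels

section Coordinates

open WithLp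

variable {N : ℕ}

theorem toLp_mem_ball_iff {z : Fin N → ℂ} :
    toLp 2 z ∈ ball (0 : EuclideanSpace ℂ (Fin N)) 1 ↔ z ∈ unitBall N := by
  rw [mem_ball_zero_iff, ← sq_lt_one_iff₀ (norm_nonneg _), EuclideanSpace.norm_sq_eq]
  rfl

theorem inner_toLp_toLp_eq_sum (w z : Fin N → ℂ) :
    ⟪toLp 2 w, toLp 2 z⟫_ℂ = ∑ j, z j * conj (w j) := by
  simp [PiLp.inner_apply]

/-- A self-map of `ℂ^N` read as a self-map of the Hilbert space `EuclideanSpace ℂ (Fin N)`. -/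
def euclideanMap (φ : (Fin N → ℂ) → Fin N → ℂ) (z : EuclideanSpace ℂ (Fin N)) :
    EuclideanSpace ℂ (Fin N) :=
  toLp 2 (φ (ofLp z))

theorem isHermitianOnKernels_euclideanMap {ψ : (Fin N → ℂ) → ℂ} {φ : (Fin N → ℂ) → Fin N → ℂ}
    (hmap : ∀ z ∈ unitBall N, φ z ∈ unitBall N)
    (hdagger : ∀ z ∈ unitBall N, ∀ w ∈ unitBall N,
      ψ z * (1 - Complex.log (1 - ∑ j, φ z j * conj (w j))) =
        conj (ψ w) * (1 - Complex.log (1 - ∑ j, z j * conj (φ w j)))) :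
    IsHermitianOnKernels (fun z => ψ (ofLp z)) (euclideanMap φ) where
  mapsTo z hz := toLp_mem_ball_iff.2 (hmap _ (toLp_mem_ball_iff.1 hz))
  mul_logKernel z hz w hw := by
    have key := hdagger _ (toLp_mem_ball_iff.1 hz) _ (toLp_mem_ball_iff.1 hw)
    simp only [← inner_toLp_toLp_eq_sum] at key
    exact key

theorem jac0_apply (φ : (Fin N → ℂ) → Fin N → ℂ) (i j : Fin N) :
    jac0 N φ i j = fderiv ℂ (euclideanMap φ) 0 (EuclideanSpace.single j 1) i := by
  let e := EuclideanSpace.equiv (Fin N) ℂ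
  have hconj : fderiv ℂ (euclideanMap φ) 0 =
      (e.symm : (Fin N → ℂ) →L[ℂ] EuclideanSpace ℂ (Fin N)) ∘L fderiv ℂ φ 0 ∘L e := by
    change fderiv ℂ (e.symm ∘ φ ∘ e) 0 = _
    rw [e.symm.comp_fderiv, e.comp_right_fderiv, map_zero]
  rw [hconj]
  rfl

theorem adjoint_fderiv_euclideanMap_apply (φ : (Fin N → ℂ) → Fin N → ℂ) (z : Fin N → ℂ)
    (k : Fin N) :
    ContinuousLinearMap.adjoint (fderiv ℂ (euclideanMap φ) 0) (toLp 2 z) k =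
      ∑ j, conj (jac0 N φ j k) * z j := by
  have hcoord := ContinuousLinearMap.adjoint_inner_right (fderiv ℂ (euclideanMap φ) 0)
    (EuclideanSpace.single k 1) (toLp 2 z)
  rw [EuclideanSpace.inner_single_left, map_one, one_mul] at hcoord
  simp only [hcoord, PiLp.inner_apply, RCLike.inner_apply', jac0_apply]

theorem conjTranspose_jac0_of_isSelfAdjoint {φ : (Fin N → ℂ) → Fin N → ℂ}
    (h : IsSelfAdjoint (fderiv ℂ (euclideanMap φ) 0)) :
    (jac0 N φ).conjTranspose = jac0 N φ := by
  ext i j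
  have hcoord := adjoint_fderiv_euclideanMap_apply φ (Pi.single j 1) i
  rw [h.adjoint_eq] at hcoord
  rw [jac0_apply φ i j]
  simpa [Pi.single_apply] using hcoord.symm

end Coordinates

theorem stmt_4_general {E : Type*} [NormedAddCommGroup E] [InnerProductSpace ℂ E]
    [CompleteSpace E] {ψ : E → ℂ} {φ : E → E} (h : IsHermitianOnKernels ψ φ) :
    (ψ 0).im = 0 ∧
      (∀ z ∈ ball (0 : E) 1, ψ z = ψ 0 * logKernel ⟪φ 0, z⟫_ℂ) ∧
      (ψ 0 ≠ 0 →
        DifferentiableOn ℂ φ (ball 0 1) ∧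
        (∀ z ∈ ball (0 : E) 1,
          φ z = φ 0 + ((1 - ⟪φ 0, z⟫_ℂ) * logKernel ⟪φ 0, z⟫_ℂ)⁻¹ •
            ContinuousLinearMap.adjoint (fderiv ℂ φ 0) z) ∧
        IsSelfAdjoint (fderiv ℂ φ 0)) :=
  ⟨Complex.conj_eq_iff_im.1 h.conj_apply_zero, fun _ hz => h.apply_eq_mul_logKernel hz, fun h0 =>
    ⟨h.differentiableOn h0, fun _ hz => h.map_eq_add_adjoint_fderiv h0 hz,
      h.isSelfAdjoint_fderiv h0⟩⟩

theorem stmt_4 (N : ℕ) (hN : 1 ≤ N)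
    (ψ : (Fin N → ℂ) → ℂ) (φ : (Fin N → ℂ) → Fin N → ℂ)
    (hψ : DifferentiableOn ℂ ψ (unitBall N))
    (hφ : DifferentiableOn ℂ φ (unitBall N))
    (hmap : ∀ z ∈ unitBall N, φ z ∈ unitBall N)
    (hdagger : ∀ z ∈ unitBall N, ∀ w ∈ unitBall N,
      ψ z * (1 - Complex.log (1 - ∑ j, φ z j * conj (w j))) =
        conj (ψ w) * (1 - Complex.log (1 - ∑ j, z j * conj (φ w j)))) :
    (ψ 0).im = 0 ∧
      (∀ z ∈ unitBall N,
        ψ z = ψ 0 * (1 - Complex.log (1 - ∑ m, z m * conj (φ 0 m)))) ∧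
      (ψ 0 ≠ 0 →
        (∀ k : Fin N, ∀ z ∈ unitBall N,
          φ z k = φ 0 k +
            (∑ j, conj (jac0 N φ j k) * z j) /
              ((1 - ∑ m, z m * conj (φ 0 m)) *
                (1 - Complex.log (1 - ∑ m, z m * conj (φ 0 m))))) ∧
        (jac0 N φ).conjTranspose = jac0 N φ) := by
  have hherm := isHermitianOnKernels_euclideanMap hmap hdagger
  obtain ⟨him, hψ_eq, hne⟩ := stmt_4_general hherm
  refine ⟨him, fun z hz => ?_, fun h0 => ?_⟩
  · have key := hψ_eq _ (toLp_mem_ball_iff.2 hz)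
    rwa [euclideanMap, inner_toLp_toLp_eq_sum] at key
  · obtain ⟨-, hφ_eq, hself⟩ := hne h0
    refine ⟨fun k z hz => ?_, conjTranspose_jac0_of_isSelfAdjoint hself⟩
    have key := congr($(hφ_eq _ (toLp_mem_ball_iff.2 hz)) k)
    rw [PiLp.add_apply, PiLp.smul_apply, adjoint_fderiv_euclideanMap_apply, smul_eq_mul,
      inv_mul_eq_div] at key
    simpa only [euclideanMap, WithLp.ofLp_zero, inner_toLp_toLp_eq_sum, logKernel] using key
end

section
/- Let A be a symmetric N×N complex matrix (Aᵀ = A), λ ∈ ℂ, and b ∈ ℝ^N with 0 < |b| < 1 and A·b = λ·b. Set c = (I_N − A)·b and T = √(1−|b|²)·I_N + (1 − √(1−|b|²))·(b·bᵀ)/|b|². Then for all z,w ∈ ℂ^N: (1 − ⟨b, conj(Az+c)⟩ − ⟨w, b − T·conj(Az+c)⟩)^N = (1 − ⟨b, z̄⟩ − ⟨c, b⟩ + ⟨c, T·z̄⟩ − ⟨Aw, b⟩ + ⟨Aw, T·z̄⟩)^N, where ⟨u,v⟩ = Σ_j u_j·conj(v_j), conj(·) and z̄ denote entrywise complex conjugation,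 and b·bᵀ has entries b_i·b_j. -/
open ComplexConjugate

/-- The real vector `b ∈ ℝ^N` viewed in `ℂ^N`. -/
def bC (N : ℕ) (b : Fin N → ℝ) : Fin N → ℂ := fun i => (b i : ℂ)

/-- `T = √(1−|b|²)·I_N + (1 − √(1−|b|²))·(b·bᵀ)/|b|²`, the self-adjoint linear
part of the involutive automorphism `φ_b` of the unit ball. -/
noncomputable def Tb (N : ℕ) (b : Fin N → ℝ) : Matrix (Fin N) (Fin N) ℂ :=
  (Real.sqrt (1 - ∑ i, b i ^ 2) : ℂ) • (1 : Matrix (Fin N) (Fin N) ℂ) +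
    (((1 - Real.sqrt (1 - ∑ i, b i ^ 2)) / ∑ i, b i ^ 2 : ℝ) : ℂ) •
      Matrix.vecMulVec (bC N b) (bC N b)

/-!
Because `b` is an eigenvector of the symmetric matrix `A`, the rank-one matrix `b bᵀ` commutes with
`A`, and hence so does `T`. As `T b = b`, the vector `c = (1 - A) b` is then also fixed by `T`.
Moving `A` and `T` across the symmetric pairing `u ⬝ᵥ v` brings the bases of both powers to the
same value `1 - b ⬝ᵥ A z - c ⬝ᵥ b - w ⬝ᵥ A b + w ⬝ᵥ T A z`.
-/

open Matrix

section SymmetricMatrices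

variable {n R : Type*} [Fintype n] [CommSemiring R] {A T : Matrix n n R} {b : n → R}

theorem mulVec_dotProduct_of_isSymm (hA : A.IsSymm) (u v : n → R) :
    A *ᵥ u ⬝ᵥ v = u ⬝ᵥ A *ᵥ v := by
  rw [dotProduct_mulVec, ← mulVec_transpose, hA.eq]

theorem commute_vecMulVec_self_of_mulVec_eq_smul (hA : A.IsSymm) {lam : R}
    (hAb : A *ᵥ b = lam • b) : Commute A (vecMulVec b b) :=
  calc A * vecMulVec b b = vecMulVec (lam • b) b := by rw [mul_vecMulVec, hAb]
    _ = vecMulVec b (lam • b) := by rw [smul_vecMulVec, vecMulVec_smul]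
    _ = vecMulVec b b * A := by rw [vecMulVec_mul, ← mulVec_transpose, hA.eq, hAb]

theorem star_mulVec_star_of_isSymm_of_isHermitian [StarRing R]
    (hT_symm : T.IsSymm) (hT_herm : T.IsHermitian) (v : n → R) : star (T *ᵥ star v) = T *ᵥ v := by
  rw [star_mulVec, star_star, hT_herm.eq, ← mulVec_transpose, hT_symm.eq]

end SymmetricMatrices

theorem stmt_15_general {n R : Type*} [Fintype n] [DecidableEq n] [CommRing R] [StarRing R]
    {A T : Matrix n n R} {b : n → R} (hA : A.IsSymm) (hT_symm : T.IsSymm)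
    (hT_herm : T.IsHermitian) (hAT : Commute A T) (hb : star b = b) (hTb : T *ᵥ b = b)
    (z w : n → R) :
    1 - b ⬝ᵥ star (star (A *ᵥ z + (1 - A) *ᵥ b)) -
        w ⬝ᵥ star (b - T *ᵥ star (A *ᵥ z + (1 - A) *ᵥ b)) =
      1 - b ⬝ᵥ star (star z) - (1 - A) *ᵥ b ⬝ᵥ star b +
        (1 - A) *ᵥ b ⬝ᵥ star (T *ᵥ star z) - A *ᵥ w ⬝ᵥ star b +
        A *ᵥ w ⬝ᵥ star (T *ᵥ star z) := by
  set c := (1 - A) *ᵥ b with hc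
  have c_eq : c = b - A *ᵥ b := by rw [hc, sub_mulVec, one_mulVec]
  have T_fixes_c : T *ᵥ c = c := by
    rw [c_eq, mulVec_sub, mulVec_mulVec, ← hAT.eq, ← mulVec_mulVec, hTb]
  simp only [star_star, star_sub, star_mulVec_star_of_isSymm_of_isHermitian hT_symm hT_herm, hb]
  calc 1 - b ⬝ᵥ (A *ᵥ z + c) - w ⬝ᵥ (b - T *ᵥ (A *ᵥ z + c))
      = 1 - b ⬝ᵥ A *ᵥ z - c ⬝ᵥ b - w ⬝ᵥ A *ᵥ b + w ⬝ᵥ T *ᵥ A *ᵥ z := by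
        rw [mulVec_add, T_fixes_c, c_eq]
        simp only [dotProduct_add, dotProduct_sub, sub_dotProduct, dotProduct_comm (A *ᵥ b) b]
        ring
    _ = 1 - b ⬝ᵥ z - c ⬝ᵥ b + c ⬝ᵥ z - w ⬝ᵥ A *ᵥ b + w ⬝ᵥ A *ᵥ T *ᵥ z := by
        rw [mulVec_mulVec, mulVec_mulVec, hAT.eq, c_eq]
        simp only [sub_dotProduct, mulVec_dotProduct_of_isSymm hA b z]
        ring
    _ = 1 - b ⬝ᵥ z - c ⬝ᵥ b + c ⬝ᵥ T *ᵥ z - A *ᵥ w ⬝ᵥ b + A *ᵥ w ⬝ᵥ T *ᵥ z := by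
        rw [← mulVec_dotProduct_of_isSymm hT_symm c, T_fixes_c, mulVec_dotProduct_of_isSymm hA w,
          mulVec_dotProduct_of_isSymm hA w]

section RankOnePerturbation

variable {N : ℕ} (b : Fin N → ℝ)

theorem star_bC : star (bC N b) = bC N b :=
  funext fun i => Complex.conj_ofReal (b i)

theorem bC_dotProduct_self : bC N b ⬝ᵥ bC N b = ((∑ i, b i ^ 2 : ℝ) : ℂ) := by
  simp [bC, dotProduct, sq]

theorem Tb_isSymm : (Tb N b).IsSymm :=
  (isSymm_one.smul _).add (IsSymm.smul (transpose_vecMulVec _ _) _)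

theorem Tb_isHermitian : (Tb N b).IsHermitian := by
  have hbb : (vecMulVec (bC N b) (bC N b)).IsHermitian := by
    rw [IsHermitian, conjTranspose_vecMulVec, star_bC]
  exact (isHermitian_one.smul (Complex.conj_ofReal _)).add (hbb.smul (Complex.conj_ofReal _))

variable {b}

theorem Tb_mulVec_bC (hb : ∑ i, b i ^ 2 ≠ 0) : Tb N b *ᵥ bC N b = bC N b := by
  rw [Tb, add_mulVec, smul_mulVec, one_mulVec, smul_mulVec, vecMulVec_mulVec,
    bC_dotProduct_self, op_smul_eq_smul, smul_smul, ← Complex.ofReal_mul, div_mul_cancel₀ _ hb,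
    ← add_smul, ← Complex.ofReal_add, add_sub_cancel, Complex.ofReal_one, one_smul]

theorem commute_Tb_of_mulVec_eq_smul {A : Matrix (Fin N) (Fin N) ℂ} (hA : A.IsSymm) {lam : ℂ}
    (hAb : A *ᵥ bC N b = lam • bC N b) : Commute A (Tb N b) :=
  ((Commute.one_right A).smul_right _).add_right
    ((commute_vecMulVec_self_of_mulVec_eq_smul hA hAb).smul_right _)

end RankOnePerturbation

theorem stmt_15 (N : ℕ) (A : Matrix (Fin N) (Fin N) ℂ) (hA : A.transpose = A)
    (lam : ℂ) (b : Fin N → ℝ)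
    (hb0 : 0 < ∑ i, b i ^ 2) (hb1 : ∑ i, b i ^ 2 < 1)
    (hAb : A.mulVec (bC N b) = fun i => lam * bC N b i) :
    ∀ z w : Fin N → ℂ,
      (1 - (∑ j, bC N b j * conj (star (A.mulVec z + (1 - A).mulVec (bC N b)) j)) -
          ∑ j, w j *
            conj (bC N b j -
              (Tb N b).mulVec (star (A.mulVec z + (1 - A).mulVec (bC N b))) j)) ^ N =
      (1 - (∑ j, bC N b j * conj (star z j)) -
          (∑ j, (1 - A).mulVec (bC N b) j * conj (bC N b j)) +
          (∑ j, (1 - A).mulVec (bC N b) j * conj ((Tb N b).mulVec (star z) j)) -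
          (∑ j, A.mulVec w j * conj (bC N b j)) +
          (∑ j, A.mulVec w j * conj ((Tb N b).mulVec (star z) j))) ^ N := by
  intro z w
  exact congrArg (· ^ N) <| stmt_15_general hA (Tb_isSymm b) (Tb_isHermitian b)
    (commute_Tb_of_mulVec_eq_smul hA hAb) (star_bC b) (Tb_mulVec_bC hb0.ne') z w
end
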